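/- arXiv:1405.0531 — 2 statements merged into one kernel-verified Lean document; each statement's English description precedes it below -/
import Mathlib

section
/- Assume a > 3b and set E' := (xyz)^{a-3b} w^3 − t u v. Then the Rees ideal 𝓘 of I = (x^a, y^a, z^a, (xyz)^b) equals the ideal of S generated by f1, f2, f3, g1, g2, g3, H1, H2, H3 and E'. -/
/-!
The Rees ideal of `(x i ^ a, (∏ i, x i) ^ b)`, for `n` variables and `n * b ≤ a`, is the kernel of a
map sending monomials to monomials, so it is spanned by the binomials `M - M'` whose terms have the
same image `x ^ p * T ^ d`. It remains to connect `M` to `M'` by moves that replace one term of a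
generator by the other; induct on `d`, which drops whenever `M` and `M'` acquire a common factor
`u j` or `w`. Say `w` occurs in `M'` at least as often as in `M`. If `u i` divides `M` and `u j`
divides `M'`, then `M` has `u j` as a factor or can be given it by a syzygy of `x i ^ a` and
`x j ^ a`. If only `M` involves the `u i`, let `s` be the set of those occurring in it: comparing
exponents, `M'` contains `w ^ #s`, and the Sylvester form of `s` makes it a factor of `M` as well.
-/

open MvPolynomial

section BinomialIdeals

lemma ker_le_of_linearIndependent_of_span_eq_top {R M N ι κ : Type*} [Ring R] [AddCommGroup M]
    [AddCommGroup N] [Module R M] [Module R N] {w : κ → N} (hw : LinearIndependent R w)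
    {v : ι → M} (hv : Submodule.span R (Set.range v) = ⊤) {g : ι → κ} {φ : M →ₗ[R] N}
    (hφ : ∀ i, φ (v i) = w (g i)) {J : Submodule R M}
    (hJ : ∀ i j, g i = g j → v i - v j ∈ J) : LinearMap.ker φ ≤ J := by
  intro m hm
  obtain ⟨c, rfl⟩ : ∃ c, Finsupp.linearCombination R v c = m := by
    rw [← LinearMap.mem_range, Finsupp.range_linearCombination, hv]
    trivial
  have hc : Finsupp.mapDomain g c = 0 := by
    apply hw
    rw [map_zero, Finsupp.linearCombination_mapDomain, ← LinearMap.mem_ker.mp hm,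
      Finsupp.apply_linearCombination]
    exact congrArg (Finsupp.linearCombination R · c) (funext fun i => (hφ i).symm)
  obtain ⟨q, hq⟩ : ∃ q, J.mkQ ∘ v = q ∘ g :=
    (Function.factorsThrough_iff _).mp fun i j h => (Submodule.Quotient.eq J).mpr (hJ i j h)
  rw [← Submodule.ker_mkQ J, LinearMap.mem_ker, Finsupp.apply_linearCombination, hq,
    ← Finsupp.linearCombination_mapDomain, hc, map_zero]

variable {E S : Type*} [AddMonoid E] [CommRing S]

/-- The ideal generated by the binomials `m e - m e'` with `r e e'`, for a family of monomials `m`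
given by a homomorphism from the monoid `E` of exponents. -/
def binomialIdeal (m : Multiplicative E →* S) (r : E → E → Prop) : Ideal S :=
  Ideal.span {p | ∃ e e', r e e' ∧ m (.ofAdd e) - m (.ofAdd e') = p}

lemma sub_mem_binomialIdeal (m : Multiplicative E →* S) {r : E → E → Prop} {e e' : E}
    (h : addConGen r e e') : m (.ofAdd e) - m (.ofAdd e') ∈ binomialIdeal m r := by
  let c := AddCon.ker <| MonoidHom.toAdditiveRight <|
    (Ideal.Quotient.mk (binomialIdeal m r) : S →* S ⧸ binomialIdeal m r).comp m
  have hc (e e' : E) : c e e' ↔ m (.ofAdd e) - m (.ofAdd e') ∈ binomialIdeal m r :=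
    AddCon.ker_apply.trans (Ideal.Quotient.eq (I := binomialIdeal m r))
  have hle : addConGen r ≤ c := AddCon.addConGen_le.mpr fun e e' h =>
    (hc e e').mpr (Ideal.subset_span ⟨e, e', h, rfl⟩)
  exact (hc e e').mp (hle h)

theorem ker_eq_binomialIdeal {k T N : Type*} [CommRing k] [CommRing T] [AddZeroClass N]
    [Algebra k S] [Algebra k T] {m : Multiplicative E →* S}
    (hm : Submodule.span k (Set.range m) = ⊤) {v : N → T} (hv : LinearIndependent k v)
    {g : E →+ N} {φ : S →ₐ[k] T} (hφ : ∀ e, φ (m (.ofAdd e)) = v (g e)) {r : E → E → Prop}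
    (hr : addConGen r = AddCon.ker g) : RingHom.ker φ = binomialIdeal m r := by
  have hrg {e e' : E} : addConGen r e e' ↔ g e = g e' := hr ▸ AddCon.ker_apply
  apply le_antisymm
  · exact ker_le_of_linearIndependent_of_span_eq_top hv (φ := φ.toLinearMap)
      (J := (binomialIdeal m r).restrictScalars k) hm hφ
      fun e e' h => sub_mem_binomialIdeal m (hrg.mpr h)
  · refine Ideal.span_le.mpr ?_
    rintro _ ⟨e, e', h, rfl⟩
    rw [SetLike.mem_coe, RingHom.mem_ker, map_sub, hφ, hφ, hrg.mp (.of e e' h), sub_self]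

end BinomialIdeals

section Exponents

lemma exists_addCon_add_of_le {E : Type*} [AddSemigroup E] [LE E] [ExistsAddOfLE E]
    (c : AddCon E) {r r' m e : E} (h : c r r') (hr : r ≤ e) (hm : m ≤ r') :
    ∃ f, c e (m + f) := by
  obtain ⟨g, rfl⟩ := exists_add_of_le hr
  obtain ⟨f, rfl⟩ := exists_add_of_le hm
  exact ⟨f + g, by simpa only [add_assoc] using c.add h (c.refl g)⟩

lemma pi_single_le_iff {ι : Type*} {M : ι → Type*} [DecidableEq ι] [∀ i, AddMonoid (M i)]
    [∀ i, Preorder (M i)] [∀ i, CanonicallyOrderedAdd (M i)] {i : ι} {c : M i} {f : ∀ i, M i} :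
    Pi.single i c ≤ f ↔ c ≤ f i := by
  simp [Pi.single, update_le_iff]

/-- Exponents of the monomials `x ^ p * u ^ q * w ^ l` of the ring `k[x][u, w]`, where `x` and `u`
are families of variables indexed by `ι` and `w` is a single variable, encoded as `(p, q, l)`. -/
abbrev ReesExponent (ι : Type*) := (ι → ℕ) × (ι → ℕ) × ℕ

variable {ι : Type*} [Fintype ι] {a b : ℕ}

/-- The exponents of `x` and of `T` in the image of the monomial `x ^ p * u ^ q * w ^ l` under
`u i ↦ x i ^ a * T` and `w ↦ (∏ i, x i) ^ b * T`. -/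
def reesDegree (a b : ℕ) : ReesExponent ι →+ (ι → ℕ) × ℕ where
  toFun e := (fun i => e.1 i + a * e.2.1 i + b * e.2.2, ∑ i, e.2.1 i + e.2.2)
  map_zero' := by ext <;> simp
  map_add' e f := by
    ext
    · simp only [Prod.fst_add, Prod.snd_add, Pi.add_apply]
      ring
    · simp only [Prod.snd_add, Prod.fst_add, Pi.add_apply, Finset.sum_add_distrib]
      ring

lemma reesDegree_eq_iff {e e' : ReesExponent ι} : reesDegree a b e = reesDegree a b e' ↔
    (∀ i, e.1 i + a * e.2.1 i + b * e.2.2 = e'.1 i + a * e'.2.1 i + b * e'.2.2) ∧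
      ∑ i, e.2.1 i + e.2.2 = ∑ i, e'.2.1 i + e'.2.2 := by
  rw [Prod.ext_iff, funext_iff]
  rfl

lemma eq_of_reesDegree_eq {e e' : ReesExponent ι} (h : reesDegree a b e = reesDegree a b e')
    (hl : e.2.2 ≤ e'.2.2) (he : e.2.1 = 0) : e = e' := by
  obtain ⟨hx, hT⟩ := reesDegree_eq_iff.mp h
  simp only [he, Pi.zero_apply, mul_zero, add_zero, Finset.sum_const_zero, zero_add] at hx hT
  have hl' : e.2.2 = e'.2.2 := by omega
  have he' : e'.2.1 = 0 := by
    rw [← Fintype.sum_eq_zero_iff_of_nonneg zero_le]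
    omega
  refine Prod.ext (funext fun i => ?_) (Prod.ext (he.trans he'.symm) hl')
  simpa [he', hl'] using hx i

variable [LinearOrder ι]

/-- The pairs of exponents of the two terms of the binomial generators of the Rees ideal of
`(x i ^ a, (∏ i, x i) ^ b)`: the syzygies of `x i ^ a` and `x j ^ a`, and for each nonempty set `s`
of variables the binomial with terms `(∏ i ∈ s, x i) ^ (a - #s * b) * w ^ #s` and
`(∏ i ∈ sᶜ, x i) ^ (#s * b) * ∏ i ∈ s, u i`. -/
inductive ReesRel (a b : ℕ) : ReesExponent ι → ReesExponent ι → Prop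
  | syzygy {i j : ι} (hij : i < j) :
    ReesRel a b (Pi.single i a, Pi.single j 1, 0) (Pi.single j a, Pi.single i 1, 0)
  | sylvester {s : Finset ι} (hs : s.Nonempty) :
    ReesRel a b (Set.indicator s fun _ => a - s.card * b, 0, s.card)
      (Set.indicator (sᶜ : Finset ι) fun _ => s.card * b, Set.indicator s fun _ => 1, 0)

lemma ReesRel.reesDegree_eq (hab : Fintype.card ι * b ≤ a) {e e' : ReesExponent ι}
    (h : ReesRel a b e e') : reesDegree a b e = reesDegree a b e' := by
  rw [reesDegree_eq_iff]
  cases h with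
  | @syzygy i j hij =>
    refine ⟨fun t => ?_, by simp⟩
    simp only [Pi.single_apply]
    split_ifs <;> ring
  | @sylvester s hs =>
    have hs : s.card * b ≤ a := (Nat.mul_le_mul_right b s.card_le_univ).trans hab
    refine ⟨fun t => ?_, by simp [Set.indicator_apply]⟩
    by_cases ht : t ∈ s
    · simp [ht, mul_comm b, hs]
    · simp [ht, mul_comm b]

lemma reesDegree_eq_of_addConGen (hab : Fintype.card ι * b ≤ a) {e e' : ReesExponent ι}
    (h : addConGen (ReesRel a b) e e') : reesDegree a b e = reesDegree a b e' :=
  AddCon.ker_apply.mp <| (AddCon.addConGen_le (c := AddCon.ker (reesDegree a b))).mpr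
    (fun _ _ h => AddCon.ker_apply.mpr (h.reesDegree_eq hab)) h

lemma addConGen_syzygy (i j : ι) : addConGen (ReesRel a b)
    (Pi.single i a, Pi.single j 1, 0) (Pi.single j a, Pi.single i 1, 0) := by
  rcases lt_trichotomy i j with h | rfl | h
  · exact .of _ _ (.syzygy h)
  · exact .refl _
  · exact .symm (.of _ _ (.syzygy h))

lemma exists_addConGen_single_add {e e' : ReesExponent ι}
    (h : reesDegree a b e = reesDegree a b e') (hl : e.2.2 ≤ e'.2.2) {i j : ι}
    (hi : 0 < e.2.1 i) (hj : 0 < e'.2.1 j) :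
    ∃ f : ReesExponent ι, addConGen (ReesRel a b) e ((0, Pi.single j 1, 0) + f) := by
  by_cases hej : 0 < e.2.1 j
  · have hle : (0, Pi.single j 1, 0) ≤ e := ⟨zero_le, pi_single_le_iff.mpr hej, zero_le⟩
    exact exists_addCon_add_of_le (addConGen (ReesRel a b)) (.refl _) hle le_rfl
  · have hp : a ≤ e.1 j := by
      have hx := (reesDegree_eq_iff.mp h).1 j
      rw [Nat.eq_zero_of_not_pos hej, mul_zero] at hx
      have hu : a ≤ a * e'.2.1 j := Nat.le_mul_of_pos_right a hj
      have hw : b * e.2.2 ≤ b * e'.2.2 := Nat.mul_le_mul_left b hl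
      omega
    exact exists_addCon_add_of_le (addConGen (ReesRel a b)) (addConGen_syzygy j i)
      ⟨pi_single_le_iff.mpr hp, pi_single_le_iff.mpr hi, zero_le⟩ ⟨zero_le, le_rfl, le_rfl⟩

lemma exists_addConGen_card_add {e e' : ReesExponent ι}
    (h : reesDegree a b e = reesDegree a b e') (he : e.2.1 ≠ 0) (he' : e'.2.1 = 0) :
    ∃ n, 0 < n ∧ n ≤ e'.2.2 ∧ ∃ f : ReesExponent ι, addConGen (ReesRel a b) e ((0, 0, n) + f) := by
  obtain ⟨hx, hT⟩ := reesDegree_eq_iff.mp h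
  simp only [he', Pi.zero_apply, mul_zero, add_zero, Finset.sum_const_zero, zero_add] at hx hT
  let s : Finset ι := {i | e.2.1 i ≠ 0}
  have hs : s.Nonempty := by
    obtain ⟨i, hi⟩ := Function.ne_iff.mp he
    exact ⟨i, by simpa [s] using hi⟩
  have hcard : s.card ≤ ∑ i, e.2.1 i := by
    calc s.card = ∑ i ∈ s, 1 := Finset.card_eq_sum_ones s
      _ ≤ ∑ i ∈ s, e.2.1 i :=
        Finset.sum_le_sum fun i hi => Nat.one_le_iff_ne_zero.mpr (by simpa [s] using hi)
      _ ≤ ∑ i, e.2.1 i := Finset.sum_le_univ_sum_of_nonneg fun _ => zero_le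
  have hp {i : ι} (hi : i ∉ s) : s.card * b ≤ e.1 i := by
    have hi : e.2.1 i = 0 := by simpa [s] using hi
    have hxi := hx i
    rw [hi, ← hT, mul_zero, mul_add] at hxi
    have hb : s.card * b ≤ b * ∑ i, e.2.1 i := mul_comm b _ ▸ Nat.mul_le_mul_left b hcard
    omega
  refine ⟨s.card, hs.card_pos, by omega, exists_addCon_add_of_le (addConGen (ReesRel a b))
    (.symm (.of _ _ (.sylvester hs))) ⟨Set.indicator_le fun i hi => hp ?_,
      Set.indicator_le fun i hi => ?_, zero_le⟩ ⟨zero_le, zero_le, le_rfl⟩⟩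
  · simpa using hi
  · simpa [s, Nat.one_le_iff_ne_zero] using hi

lemma addConGen_of_reesDegree_eq (hab : Fintype.card ι * b ≤ a) {e e' : ReesExponent ι}
    (h : reesDegree a b e = reesDegree a b e') : addConGen (ReesRel a b) e e' := by
  induction hn : (reesDegree a b e).2 using Nat.strong_induction_on generalizing e e' with
  | _ n ih =>
  wlog hl : e.2.2 ≤ e'.2.2 generalizing e e'
  · exact .symm (this h.symm (h ▸ hn) (le_of_not_ge hl))
  have cancel {m f : ReesExponent ι} (hm : 0 < (reesDegree a b m).2)
      (hf : addConGen (ReesRel a b) e (m + f)) (hme' : m ≤ e') :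
      addConGen (ReesRel a b) e e' := by
    obtain ⟨f', rfl⟩ := exists_add_of_le hme'
    have hef := reesDegree_eq_of_addConGen hab hf
    have hff' : reesDegree a b f = reesDegree a b f' := by
      rw [← add_right_inj (reesDegree a b m), ← map_add, ← map_add, ← hef, h]
    refine hf.trans ((addConGen (ReesRel a b)).add (.refl m) (ih _ ?_ hff' rfl))
    rw [← hn, hef, map_add, Prod.snd_add]
    omega
  by_cases he : e.2.1 = 0
  · exact eq_of_reesDegree_eq h hl he ▸ .refl e
  by_cases he' : e'.2.1 = 0
  · obtain ⟨n, hn, hne', f, hf⟩ := exists_addConGen_card_add h he he'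
    exact cancel (by simpa [reesDegree] using hn) hf ⟨zero_le, zero_le, hne'⟩
  · obtain ⟨i, hi⟩ := Function.ne_iff.mp he
    obtain ⟨j, hj⟩ := Function.ne_iff.mp he'
    obtain ⟨f, hf⟩ := exists_addConGen_single_add h hl (Nat.pos_of_ne_zero hi)
      (Nat.pos_of_ne_zero hj)
    exact cancel (by simp [reesDegree]) hf
      ⟨zero_le, pi_single_le_iff.mpr (Nat.pos_of_ne_zero hj), zero_le⟩

lemma addConGen_reesRel_eq_ker (hab : Fintype.card ι * b ≤ a) :
    addConGen (ReesRel (ι := ι) a b) = AddCon.ker (reesDegree a b) :=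
  AddCon.ext fun _ _ =>
    ⟨fun h => AddCon.ker_apply.mpr (reesDegree_eq_of_addConGen hab h),
      fun h => addConGen_of_reesDegree_eq hab (AddCon.ker_apply.mp h)⟩

end Exponents

section ReesIdeal

lemma prod_pow_indicator {ι M : Type*} [Fintype ι] [CommMonoid M] (x : ι → M) (s : Finset ι)
    (c : ℕ) : ∏ j, x j ^ (s : Set ι).indicator (fun _ => c) j = (∏ j ∈ s, x j) ^ c := by
  classical simp [Set.indicator_apply, pow_ite, Finset.prod_ite_mem, Finset.prod_pow]

lemma prod_X_pow_eq_monomial_equivFunOnFinite {σ R : Type*} [Fintype σ] [CommSemiring R]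
    (d : σ → ℕ) :
    ∏ i, (X i : MvPolynomial σ R) ^ d i = monomial (Finsupp.equivFunOnFinite.symm d) 1 := by
  rw [monomial_eq, C_1, one_mul, Finsupp.prod_fintype _ _ fun _ => pow_zero _]
  rfl

variable (k : Type*) [CommRing k] (n a b : ℕ)

/-- The presentation `u i ↦ x i ^ a * T`, `w ↦ (∏ i, x i) ^ b * T` of the Rees algebra of the ideal
generated by the `x i ^ a` and `(∏ i, x i) ^ b` in `k[x 0, …, x (n - 1)]`. The variables `u i` are
`X i.castSucc`, and `w` is `X (Fin.last n)`. -/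
noncomputable def reesMap : MvPolynomial (Fin (n + 1)) (MvPolynomial (Fin n) k)
    →ₐ[MvPolynomial (Fin n) k] Polynomial (MvPolynomial (Fin n) k) :=
  aeval (Fin.snoc (fun i => Polynomial.C (X i ^ a) * Polynomial.X)
    (Polynomial.C ((∏ i, X i) ^ b) * Polynomial.X) :
      Fin (n + 1) → Polynomial (MvPolynomial (Fin n) k))

/-- The binomial `x i ^ a * u j - x j ^ a * u i` coming from the syzygy of `x i ^ a` and
`x j ^ a`. -/
noncomputable def syzygyForm (i j : Fin n) : MvPolynomial (Fin (n + 1)) (MvPolynomial (Fin n) k) :=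
  C (X i ^ a) * X j.castSucc - C (X j ^ a) * X i.castSucc

/-- The Sylvester form of a set `s` of variables; for a singleton it is the syzygy of `x i ^ a` and
`(∏ i, x i) ^ b`. -/
noncomputable def sylvesterForm (s : Finset (Fin n)) :
    MvPolynomial (Fin (n + 1)) (MvPolynomial (Fin n) k) :=
  C ((∏ i ∈ s, X i) ^ (a - s.card * b)) * X (Fin.last n) ^ s.card -
    C ((∏ i ∈ sᶜ, X i) ^ (s.card * b)) * ∏ i ∈ s, X i.castSucc

/-- The monomials of `k[x][u, w]` as a function of their exponents. -/
noncomputable def reesMonomial : Multiplicative (ReesExponent (Fin n)) →*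
    MvPolynomial (Fin (n + 1)) (MvPolynomial (Fin n) k) where
  toFun e := C (∏ i, X i ^ e.toAdd.1 i) *
    ((∏ i, X i.castSucc ^ e.toAdd.2.1 i) * X (Fin.last n) ^ e.toAdd.2.2)
  map_one' := by simp
  map_mul' e f := by
    simp only [toAdd_mul, Prod.fst_add, Prod.snd_add, Pi.add_apply, pow_add,
      Finset.prod_mul_distrib, map_mul]
    ring

variable {k n a b}

@[simp]
lemma reesMonomial_ofAdd (p q : Fin n → ℕ) (l : ℕ) :
    reesMonomial k n (.ofAdd (p, q, l)) =
      C (∏ i, X i ^ p i) * ((∏ i, X i.castSucc ^ q i) * X (Fin.last n) ^ l) :=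
  rfl

lemma span_range_reesMonomial : Submodule.span k (Set.range (reesMonomial k n)) = ⊤ := by
  let B := (basisMonomials (Fin n) k).smulTower
    (basisMonomials (Fin (n + 1)) (MvPolynomial (Fin n) k))
  rw [← top_le_iff, ← B.span_eq]
  apply Submodule.span_mono
  rintro _ ⟨⟨p, s⟩, rfl⟩
  refine ⟨.ofAdd (p, fun i => s i.castSucc, s (Fin.last n)), ?_⟩
  rw [reesMonomial_ofAdd, ← Fin.prod_univ_castSucc (f := fun i => X i ^ s i),
    prod_X_pow_eq_monomial_equivFunOnFinite, prod_X_pow_eq_monomial_equivFunOnFinite]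
  simp [B, smul_eq_C_mul]

lemma linearIndependent_C_prod_mul_X_pow :
    LinearIndependent k fun d : (Fin n → ℕ) × ℕ =>
      (Polynomial.C (∏ i, X i ^ d.1 i) * Polynomial.X ^ d.2 :
        Polynomial (MvPolynomial (Fin n) k)) := by
  let B := (basisMonomials (Fin n) k).smulTower (Polynomial.basisMonomials (MvPolynomial (Fin n) k))
  convert B.linearIndependent.comp _
    (Finsupp.equivFunOnFinite.symm.injective.prodMap Function.injective_id) with d
  simp [B, prod_X_pow_eq_monomial_equivFunOnFinite, Polynomial.smul_monomial,
    Polynomial.C_mul_X_pow_eq_monomial]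

lemma reesMap_reesMonomial (e : ReesExponent (Fin n)) :
    reesMap k n a b (reesMonomial k n (.ofAdd e)) =
      Polynomial.C (∏ i, X i ^ (reesDegree a b e).1 i) * Polynomial.X ^ (reesDegree a b e).2 := by
  obtain ⟨p, q, l⟩ := e
  have hC (r : MvPolynomial (Fin n) k) : reesMap k n a b (C r) = Polynomial.C r := aeval_C _ r
  have hu (i : Fin n) : reesMap k n a b (X i.castSucc) = Polynomial.C (X i ^ a) * Polynomial.X := by
    simp [reesMap]
  have hw : reesMap k n a b (X (Fin.last n)) =
      Polynomial.C ((∏ i, X i) ^ b) * Polynomial.X := by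
    simp [reesMap]
  simp only [reesMonomial_ofAdd, map_mul, map_prod, map_pow, hC, hu, hw]
  simp only [reesDegree, AddMonoidHom.coe_mk, ZeroHom.coe_mk, mul_pow, ← pow_mul, pow_add,
    Finset.prod_mul_distrib, Finset.prod_pow_eq_pow_sum, Finset.prod_pow]
  ring

lemma binomialIdeal_reesMonomial :
    binomialIdeal (reesMonomial k n) (ReesRel a b) = Ideal.span
      (Function.uncurry (syzygyForm k n a) '' {p | p.1 < p.2} ∪
        sylvesterForm k n a b '' {s | s.Nonempty}) := by
  have hf (i j : Fin n) : reesMonomial k n (.ofAdd (Pi.single i a, Pi.single j 1, 0)) =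
      C (X i ^ a) * X j.castSucc := by
    simp [Pi.single_apply, pow_ite]
  have hw (s : Finset (Fin n)) (c : ℕ) :
      reesMonomial k n (.ofAdd ((s : Set (Fin n)).indicator fun _ => c, 0, s.card)) =
        C ((∏ i ∈ s, X i) ^ c) * X (Fin.last n) ^ s.card := by
    simp [prod_pow_indicator]
  have hu (s : Finset (Fin n)) (c : ℕ) :
      reesMonomial k n (.ofAdd (((sᶜ : Finset (Fin n)) : Set (Fin n)).indicator fun _ => c,
        (s : Set (Fin n)).indicator fun _ => 1, 0)) =
        C ((∏ i ∈ sᶜ, X i) ^ c) * ∏ i ∈ s, X i.castSucc := by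
    simp only [reesMonomial_ofAdd, prod_pow_indicator, pow_one, pow_zero, mul_one]
  refine congrArg Ideal.span (Set.ext fun p => ⟨?_, ?_⟩)
  · rintro ⟨_, _, ⟨h⟩ | ⟨h⟩, rfl⟩
    · exact .inl ⟨(_, _), h, by rw [hf, hf]; rfl⟩
    · exact .inr ⟨_, h, by rw [hw, hu]; rfl⟩
  · rintro (⟨⟨i, j⟩, h, rfl⟩ | ⟨s, h, rfl⟩)
    · exact ⟨_, _, .syzygy h, by rw [hf, hf]; rfl⟩
    · exact ⟨_, _, .sylvester h, by rw [hw, hu]; rfl⟩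

theorem stmt17_general (hab : n * b ≤ a) :
    RingHom.ker (reesMap k n a b) = Ideal.span
      (Function.uncurry (syzygyForm k n a) '' {p | p.1 < p.2} ∪
        sylvesterForm k n a b '' {s | s.Nonempty}) := by
  rw [← binomialIdeal_reesMonomial]
  have hker : addConGen (ReesRel a b) = AddCon.ker (reesDegree a b) :=
    addConGen_reesRel_eq_ker (by rwa [Fintype.card_fin])
  exact ker_eq_binomialIdeal (m := reesMonomial k n) (g := reesDegree a b)
    (φ := (reesMap k n a b).restrictScalars k) span_range_reesMonomial
    linearIndependent_C_prod_mul_X_pow reesMap_reesMonomial hker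

lemma reesMap_three : reesMap k 3 a b =
    aeval ![Polynomial.C (X 0 ^ a) * Polynomial.X, Polynomial.C (X 1 ^ a) * Polynomial.X,
      Polynomial.C (X 2 ^ a) * Polynomial.X,
      Polynomial.C ((X 0 * X 1 * X 2) ^ b) * Polynomial.X] := by
  refine algHom_ext fun i => ?_
  rw [reesMap, aeval_X, aeval_X]
  fin_cases i
  · rfl
  · rfl
  · rfl
  · exact congrArg (fun p => Polynomial.C (p ^ b) * Polynomial.X) (Fin.prod_univ_three X)

lemma syzygyForms_three : Function.uncurry (syzygyForm k 3 a) '' {p | p.1 < p.2} =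
    {C (X 0 ^ a) * X 1 - C (X 1 ^ a) * X 0,
      C (X 0 ^ a) * X 2 - C (X 2 ^ a) * X 0,
      C (X 1 ^ a) * X 2 - C (X 2 ^ a) * X 1} := by
  have hp : {p : Fin 3 × Fin 3 | p.1 < p.2} = {(0, 1), (0, 2), (1, 2)} := by
    ext p
    revert p
    decide
  rw [hp]
  simp only [Set.image_insert_eq, Set.image_singleton]
  rfl

lemma sylvesterForms_three : sylvesterForm k 3 a b '' {s | s.Nonempty} =
    {C (X 0 ^ (a - b)) * X 3 - C ((X 1 * X 2) ^ b) * X 0,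
      C (X 1 ^ (a - b)) * X 3 - C ((X 0 * X 2) ^ b) * X 1,
      C (X 2 ^ (a - b)) * X 3 - C ((X 0 * X 1) ^ b) * X 2,
      C ((X 0 * X 1) ^ (a - 2 * b)) * X 3 ^ 2 - C (X 2 ^ (2 * b)) * X 0 * X 1,
      C ((X 0 * X 2) ^ (a - 2 * b)) * X 3 ^ 2 - C (X 1 ^ (2 * b)) * X 0 * X 2,
      C ((X 1 * X 2) ^ (a - 2 * b)) * X 3 ^ 2 - C (X 0 ^ (2 * b)) * X 1 * X 2,
      C ((X 0 * X 1 * X 2) ^ (a - 3 * b)) * X 3 ^ 3 - X 0 * X 1 * X 2} := by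
  have hs : {s : Finset (Fin 3) | s.Nonempty} =
      {{0}, {1}, {2}, {0, 1}, {0, 2}, {1, 2}, {0, 1, 2}} := by
    ext s
    revert s
    decide
  have hc : ({0}ᶜ : Finset (Fin 3)) = {1, 2} ∧ ({1}ᶜ : Finset (Fin 3)) = {0, 2} ∧
      ({2}ᶜ : Finset (Fin 3)) = {0, 1} ∧ ({0, 1}ᶜ : Finset (Fin 3)) = {2} ∧
      ({0, 2}ᶜ : Finset (Fin 3)) = {1} ∧ ({1, 2}ᶜ : Finset (Fin 3)) = {0} ∧
      ({0, 1, 2}ᶜ : Finset (Fin 3)) = ∅ := by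
    decide
  rw [hs]
  simp [Set.image_insert_eq, sylvesterForm, hc, -Finset.compl_insert, mul_assoc]

end ReesIdeal

/-- Let `I = (x^a, y^a, z^a, (xyz)^b) ⊆ k[x,y,z]` with
`a > 3b`, and let `𝓘` be the Rees ideal of `I` (kernel of `S = R[t,u,v,w] → R[T]`,
`t ↦ x^a T, u ↦ y^a T, v ↦ z^a T, w ↦ (xyz)^b T`).  Then
`𝓘 = (f1, f2, f3, g1, g2, g3, H1, H2, H3, E')` with `E' = (xyz)^{a-3b} w^3 - t u v`. -/
theorem stmt17 {k : Type*} [Field k] (a b : ℕ) (hb : 0 < b) (h2b : 2 * b < a)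
    (h3b : 3 * b < a) :
    let R := MvPolynomial (Fin 3) k
    let x : R := X 0
    let y : R := X 1
    let z : R := X 2
    let S := MvPolynomial (Fin 4) R
    let t : S := X 0
    let u : S := X 1
    let v : S := X 2
    let w : S := X 3
    let ψ : S →ₐ[R] Polynomial R :=
      aeval ![Polynomial.C (x ^ a) * Polynomial.X, Polynomial.C (y ^ a) * Polynomial.X,
        Polynomial.C (z ^ a) * Polynomial.X,
        Polynomial.C ((x * y * z) ^ b) * Polynomial.X]
    RingHom.ker ψ.toRingHom = Ideal.span
      { C (x ^ a) * u - C (y ^ a) * t,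
        C (x ^ a) * v - C (z ^ a) * t,
        C (y ^ a) * v - C (z ^ a) * u,
        C (x ^ (a - b)) * w - C ((y * z) ^ b) * t,
        C (y ^ (a - b)) * w - C ((x * z) ^ b) * u,
        C (z ^ (a - b)) * w - C ((x * y) ^ b) * v,
        C ((x * y) ^ (a - 2 * b)) * w ^ 2 - C (z ^ (2 * b)) * t * u,
        C ((x * z) ^ (a - 2 * b)) * w ^ 2 - C (y ^ (2 * b)) * t * v,
        C ((y * z) ^ (a - 2 * b)) * w ^ 2 - C (x ^ (2 * b)) * u * v,
        C ((x * y * z) ^ (a - 3 * b)) * w ^ 3 - t * u * v } := by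
  simpa only [reesMap_three, syzygyForms_three, sylvesterForms_three, Set.insert_union,
    Set.singleton_union, AlgHom.toRingHom_eq_coe, AlgHom.ker_coe] using stmt17_general h3b.le
end

section
/- Let L denote the ideal of S = k[x,y,z,t,u,v,w] generated by f1, f2, f3, g1, g2, g3 (with a > 2b > 0). If 2b < a < 3b, then (L, H1, H2, H3) : E = (x^{a-b}, y^{a-b}, z^{a-b}, (xy)^{a-2b}, (xz)^{a-2b}, (yz)^{a-2b})S, where E = w^3 − (xyz)^{3b-a} t u v. If a ≥ 3b, then (L, H1, H2, H3) : E' = ((x^b, y^b, z^b)^2)S, where E' = (xyz)^{a-3b} w^3 − t u v. -/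
set_option synthInstance.maxHeartbeats 1000000

open MvPolynomial

/-!
The nine generators of the ideal `K = (L, H₁, H₂, H₃)` are equations of the Rees algebra of
`(x^a, y^a, z^a, (xyz)^b)`, of degree one and two in `t, u, v, w`, and `E`, `E'` are cubic ones.
With `m = min (b, a - 2b)`, `p = b - m` and `q = a - 2b - m`, both are, depending on which of `p`
and `q` vanishes, the binomial `(xyz)^q w³ - (xyz)^p tuv`, and both colon ideals are
`J = (x^(b+m), y^(b+m), z^(b+m), (xy)^m, (xz)^m, (yz)^m)`. Explicit combinations of two generators
of `K` show that `J` multiplies the cubic into `K`. Conversely `K ⊆ J`, and the cubic is a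
nonzerodivisor modulo `J`: since `J` is extended from the coefficient ring, it is enough that one
monomial of the cubic has coefficient `1` and strictly larger degree than the other in some
variable.
-/

section NonZeroDivisors

variable {A σ : Type*} [CommRing A] {i : σ} {e : σ →₀ ℕ} {G : MvPolynomial σ A}

theorem monomial_sub_mem_nonZeroDivisors (hG : G.degreeOf i < e i) :
    monomial e 1 - G ∈ nonZeroDivisors (MvPolynomial σ A) := by
  refine mem_nonZeroDivisors_iff_right.mpr fun F hF ↦ ?_
  by_contra hF0
  obtain ⟨d, hd, hd_max⟩ :=
    F.support.exists_mem_eq_sup (support_nonempty.mpr hF0) fun d ↦ d i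
  rw [← degreeOf_eq_sup] at hd_max
  have hFG : coeff (d + e) (F * G) = 0 := by
    refine notMem_support_iff.mp (notMem_support_of_degreeOf_lt i ?_)
    calc (F * G).degreeOf i ≤ F.degreeOf i + G.degreeOf i := degreeOf_mul_le i F G
      _ < d i + e i := by omega
  have hcoeff := congrArg (coeff (d + e)) hF
  rw [mul_sub, coeff_sub, coeff_mul_monomial, hFG, mul_one, sub_zero, coeff_zero] at hcoeff
  exact mem_support_iff.mp hd hcoeff

theorem mem_map_C_of_mul_monomial_sub_mem {I : Ideal A} {F : MvPolynomial σ A}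
    (hG : G.degreeOf i < e i)
    (hF : F * (monomial e 1 - G) ∈ I.map (C : A →+* MvPolynomial σ A)) :
    F ∈ I.map (C : A →+* MvPolynomial σ A) := by
  have hker : RingHom.ker (map (σ := σ) (Ideal.Quotient.mk I)) = I.map C := by
    rw [ker_map, Ideal.mk_ker]
  rw [← hker, RingHom.mem_ker] at hF ⊢
  rw [map_mul, map_sub, map_monomial, map_one] at hF
  have hG_map : (map (Ideal.Quotient.mk I) G).degreeOf i < e i := by
    rw [degreeOf_eq_sup] at hG ⊢
    exact (Finset.sup_mono (support_map_subset _ G)).trans_lt hG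
  exact mem_nonZeroDivisors_iff_right.mp (monomial_sub_mem_nonZeroDivisors hG_map) _ hF

end NonZeroDivisors

theorem colon_singleton_eq_of_regular {S : Type*} [CommRing S] {K J : Ideal S} {E : S}
    (hKJ : K ≤ J) (hJ : J ≤ K.colon {E}) (hE : ∀ F, F * E ∈ J → F ∈ J) : K.colon {E} = J :=
  le_antisymm (fun F hF ↦ hE F (hKJ (Submodule.mem_colon_singleton.mp hF))) hJ

section Rees

variable {S : Type*} [CommRing S]

/-- The ideal `(L, H₁, H₂, H₃)` of linear and quadratic equations of the Rees algebra of
`(x^a, y^a, z^a, (xyz)^b)`, where `t, u, v, w` stand for the four generators. The subtractions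
are the intended ones only for `2 * b ≤ a`. -/
def reesQuadraticIdeal (x y z t u v w : S) (a b : ℕ) : Ideal S :=
  Ideal.span {x ^ a * u - y ^ a * t, x ^ a * v - z ^ a * t, y ^ a * v - z ^ a * u,
    x ^ (a - b) * w - (y * z) ^ b * t, y ^ (a - b) * w - (x * z) ^ b * u,
    z ^ (a - b) * w - (x * y) ^ b * v,
    (x * y) ^ (a - 2 * b) * w ^ 2 - z ^ (2 * b) * t * u,
    (x * z) ^ (a - 2 * b) * w ^ 2 - y ^ (2 * b) * t * v,
    (y * z) ^ (a - 2 * b) * w ^ 2 - x ^ (2 * b) * u * v}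

/-- The cubic equation of the Rees algebra of `(x^a, y^a, z^a, (xyz)^b)`, where `3b + q = a + p`.
It is `E` for `q = 0` and `E'` for `p = 0`. -/
def reesCubic (x y z t u v w : S) (p q : ℕ) : S :=
  (x * y * z) ^ q * w ^ 3 - (x * y * z) ^ p * t * u * v

/-- The common form of the colon ideals of `reesQuadraticIdeal` by `reesCubic`, with
`m = min (b, a - 2b)`. -/
def reesCubicColon (x y z : S) (b m : ℕ) : Ideal S :=
  Ideal.span {x ^ (b + m), y ^ (b + m), z ^ (b + m), (x * y) ^ m, (x * z) ^ m, (y * z) ^ m}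

theorem map_reesCubicColon {R : Type*} [CommRing R] (f : R →+* S) (x y z : R) (b m : ℕ) :
    (reesCubicColon x y z b m).map f = reesCubicColon (f x) (f y) (f z) b m := by
  simp only [reesCubicColon, Ideal.map_span, Set.image_insert_eq, Set.image_singleton, map_pow,
    map_mul]

theorem reesCubicColon_self (x y z : S) (b : ℕ) :
    reesCubicColon x y z b b = Ideal.span {x ^ b, y ^ b, z ^ b} ^ 2 := by
  rw [reesCubicColon, pow_two, Ideal.span_mul_span']
  congr 1
  ext s
  simp only [Set.mem_mul, Set.mem_insert_iff, Set.mem_singleton_iff, exists_eq_or_imp,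
    exists_eq_left, ← pow_add, ← mul_pow, mul_comm y x, mul_comm z x, mul_comm z y]
  tauto

variable {x y z t u v w : S} {a b m p q : ℕ}

theorem reesQuadraticIdeal_le_reesCubicColon (hmb : m ≤ b) (hma : 2 * b + m ≤ a) :
    reesQuadraticIdeal x y z t u v w a b ≤ reesCubicColon x y z b m := by
  set J := reesCubicColon x y z b m
  have pow_mem {s : S} {j n : ℕ} (hs : s ^ j ∈ J) (hjn : j ≤ n) : s ^ n ∈ J :=
    J.mem_of_dvd (pow_dvd_pow s hjn) hs
  have hx {n : ℕ} : b + m ≤ n → x ^ n ∈ J := pow_mem (Ideal.subset_span (by simp))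
  have hy {n : ℕ} : b + m ≤ n → y ^ n ∈ J := pow_mem (Ideal.subset_span (by simp))
  have hz {n : ℕ} : b + m ≤ n → z ^ n ∈ J := pow_mem (Ideal.subset_span (by simp))
  have hxy {n : ℕ} : m ≤ n → (x * y) ^ n ∈ J := pow_mem (Ideal.subset_span (by simp))
  have hxz {n : ℕ} : m ≤ n → (x * z) ^ n ∈ J := pow_mem (Ideal.subset_span (by simp))
  have hyz {n : ℕ} : m ≤ n → (y * z) ^ n ∈ J := pow_mem (Ideal.subset_span (by simp))
  have linear_mem {r s : S} (c d : S) (hr : r ∈ J) (hs : s ∈ J) : r * c - s * d ∈ J :=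
    J.sub_mem (J.mul_mem_right c hr) (J.mul_mem_right d hs)
  have quadratic_mem {r s : S} (c d d' : S) (hr : r ∈ J) (hs : s ∈ J) : r * c - s * d * d' ∈ J :=
    mul_assoc s d d' ▸ linear_mem c (d * d') hr hs
  simp only [reesQuadraticIdeal, Ideal.span_le, Set.insert_subset_iff, Set.singleton_subset_iff,
    SetLike.mem_coe]
  exact ⟨linear_mem _ _ (hx (by omega)) (hy (by omega)),
    linear_mem _ _ (hx (by omega)) (hz (by omega)),
    linear_mem _ _ (hy (by omega)) (hz (by omega)),
    linear_mem _ _ (hx (by omega)) (hyz (by omega)),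
    linear_mem _ _ (hy (by omega)) (hxz (by omega)),
    linear_mem _ _ (hz (by omega)) (hxy (by omega)),
    quadratic_mem _ _ _ (hxy (by omega)) (hz (by omega)),
    quadratic_mem _ _ _ (hxz (by omega)) (hy (by omega)),
    quadratic_mem _ _ _ (hyz (by omega)) (hx (by omega))⟩

theorem variable_pow_mul_cubic_mem {K : Ideal S} {r : S}
    (hg : x ^ (2 * m + p + q) * w - r ^ (m + p) * t ∈ K)
    (hH : r ^ (m + q) * w ^ 2 - x ^ (2 * (m + p)) * u * v ∈ K) :
    x ^ (2 * m + p) * ((x * r) ^ q * w ^ 3 - (x * r) ^ p * t * u * v) ∈ K := by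
  have key := K.add_mem (K.mul_mem_left (r ^ q * w ^ 2) hg) (K.mul_mem_left (r ^ p * t) hH)
  convert key using 1
  ring

theorem cofactor_pow_mul_cubic_mem {K : Ideal S} {r : S}
    (hH : r ^ (m + q) * w ^ 2 - z ^ (2 * (m + p)) * t * u ∈ K)
    (hg : z ^ (2 * m + p + q) * w - r ^ (m + p) * v ∈ K) :
    r ^ m * ((r * z) ^ q * w ^ 3 - (r * z) ^ p * t * u * v) ∈ K := by
  have key := K.add_mem (K.mul_mem_left (z ^ q * w) hH) (K.mul_mem_left (z ^ p * t * u) hg)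
  convert key using 1
  ring

theorem reesCubicColon_le_colon (hb : b = m + p) (ha : a = 2 * b + (m + q)) :
    reesCubicColon x y z b m ≤
      (reesQuadraticIdeal x y z t u v w a b).colon {reesCubic x y z t u v w p q} := by
  set K := reesQuadraticIdeal x y z t u v w a b with hK
  have hab : a - b = 2 * m + p + q := by omega
  have ha2b : a - 2 * b = m + q := by omega
  have hbm : b + m = 2 * m + p := by omega
  rw [reesQuadraticIdeal, hab, ha2b, hb] at hK
  have hg₁ : x ^ (2 * m + p + q) * w - (y * z) ^ (m + p) * t ∈ K :=
    hK ▸ Ideal.subset_span (by simp)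
  have hg₂ : y ^ (2 * m + p + q) * w - (x * z) ^ (m + p) * u ∈ K :=
    hK ▸ Ideal.subset_span (by simp)
  have hg₃ : z ^ (2 * m + p + q) * w - (x * y) ^ (m + p) * v ∈ K :=
    hK ▸ Ideal.subset_span (by simp)
  have hH₁ : (x * y) ^ (m + q) * w ^ 2 - z ^ (2 * (m + p)) * t * u ∈ K :=
    hK ▸ Ideal.subset_span (by simp)
  have hH₂ : (x * z) ^ (m + q) * w ^ 2 - y ^ (2 * (m + p)) * t * v ∈ K :=
    hK ▸ Ideal.subset_span (by simp)
  have hH₃ : (y * z) ^ (m + q) * w ^ 2 - x ^ (2 * (m + p)) * u * v ∈ K :=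
    hK ▸ Ideal.subset_span (by simp)
  simp only [reesCubicColon, hbm, Ideal.span_le, Set.insert_subset_iff, Set.singleton_subset_iff,
    SetLike.mem_coe, Submodule.mem_colon_singleton, smul_eq_mul, reesCubic]
  refine ⟨?_, ?_, ?_, ?_, ?_, ?_⟩
  · convert variable_pow_mul_cubic_mem hg₁ hH₃ using 1; ring
  · convert variable_pow_mul_cubic_mem hg₂ hH₂ using 1; ring
  · convert variable_pow_mul_cubic_mem hg₃ hH₁ using 1; ring
  · exact cofactor_pow_mul_cubic_mem hH₁ hg₃
  · convert cofactor_pow_mul_cubic_mem hH₂ hg₂ using 1; ring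
  · convert cofactor_pow_mul_cubic_mem hH₃ hg₁ using 1; ring

end Rees

section Polynomial

variable {R : Type*} [CommRing R]

theorem mem_map_C_of_mul_reesCubic_mem {I : Ideal R} {F : MvPolynomial (Fin 4) R} {x y z : R}
    {p q : ℕ} (hpq : p = 0 ∨ q = 0)
    (hF : F * reesCubic (C x) (C y) (C z) (X 0) (X 1) (X 2) (X 3) p q ∈ I.map C) :
    F ∈ I.map C := by
  have htuv : (X 0 * X 1 * X 2 : MvPolynomial (Fin 4) R) =
      monomial (Finsupp.single 0 1 + Finsupp.single 1 1 + Finsupp.single 2 1) 1 := by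
    simp only [X, monomial_mul, mul_one]
  rcases hpq with rfl | rfl
  · refine mem_map_C_of_mul_monomial_sub_mem (i := 0)
      (e := Finsupp.single 0 1 + Finsupp.single 1 1 + Finsupp.single 2 1)
      (G := C ((x * y * z) ^ q) * X 3 ^ 3) ?_ ?_
    · calc degreeOf 0 (C ((x * y * z) ^ q) * X 3 ^ 3 : MvPolynomial (Fin 4) R)
          ≤ degreeOf 0 (X 3 ^ 3 : MvPolynomial (Fin 4) R) := degreeOf_C_mul_le _ _ _
        _ = 0 := degreeOf_X_pow_of_ne _ (by decide)
        _ < _ := by simp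
    · rw [← htuv, ← Ideal.neg_mem_iff]
      convert hF using 1
      simp only [reesCubic, map_pow, map_mul]
      ring
  · refine mem_map_C_of_mul_monomial_sub_mem (i := 3) (e := Finsupp.single 3 3)
      (G := C ((x * y * z) ^ p) * (X 0 * X 1 * X 2)) ?_ ?_
    · calc degreeOf 3 (C ((x * y * z) ^ p) * (X 0 * X 1 * X 2) : MvPolynomial (Fin 4) R)
          ≤ degreeOf 3 (X 0 * X 1 * X 2 : MvPolynomial (Fin 4) R) := degreeOf_C_mul_le _ _ _
        _ ≤ degreeOf 3 (X 0 : MvPolynomial (Fin 4) R) + degreeOf 3 (X 1 : MvPolynomial (Fin 4) R)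
            + degreeOf 3 (X 2 : MvPolynomial (Fin 4) R) :=
          (degreeOf_mul_le _ _ _).trans (Nat.add_le_add_right (degreeOf_mul_le _ _ _) _)
        _ = 0 := by simp [degreeOf_X_of_ne]
        _ < _ := by simp
    · rw [← X_pow_eq_monomial]
      convert hF using 1
      simp only [reesCubic, map_pow, map_mul]
      ring

theorem reesQuadraticIdeal_colon_reesCubic (x y z : R) {a b m p q : ℕ} (hb : b = m + p)
    (ha : a = 2 * b + (m + q)) (hpq : p = 0 ∨ q = 0) :
    (reesQuadraticIdeal (C x) (C y) (C z) (X 0) (X 1) (X 2) (X 3 : MvPolynomial (Fin 4) R)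
      a b).colon {reesCubic (C x) (C y) (C z) (X 0) (X 1) (X 2) (X 3) p q} =
      reesCubicColon (C x) (C y) (C z) b m := by
  refine colon_singleton_eq_of_regular
    (reesQuadraticIdeal_le_reesCubicColon (by omega) (by omega))
    (reesCubicColon_le_colon hb ha) fun F hF ↦ ?_
  rw [← map_reesCubicColon] at hF ⊢
  exact mem_map_C_of_mul_reesCubic_mem hpq hF

theorem stmt19_general (x y z : R) {a b : ℕ} (h2b : 2 * b ≤ a) :
    let K : Ideal (MvPolynomial (Fin 4) R) :=
      reesQuadraticIdeal (C x) (C y) (C z) (X 0) (X 1) (X 2) (X 3) a b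
    (a ≤ 3 * b →
      K.colon {X 3 ^ 3 - (C x * C y * C z) ^ (3 * b - a) * X 0 * X 1 * X 2} =
        Ideal.span {C x ^ (a - b), C y ^ (a - b), C z ^ (a - b), (C x * C y) ^ (a - 2 * b),
          (C x * C z) ^ (a - 2 * b), (C y * C z) ^ (a - 2 * b)}) ∧
    (3 * b ≤ a →
      K.colon {(C x * C y * C z) ^ (a - 3 * b) * X 3 ^ 3 - X 0 * X 1 * X 2} =
        Ideal.span {C x ^ b, C y ^ b, C z ^ b} ^ 2) := by
  refine ⟨fun h ↦ ?_, fun h ↦ ?_⟩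
  · have key := reesQuadraticIdeal_colon_reesCubic x y z (a := a) (b := b) (m := a - 2 * b)
      (p := 3 * b - a) (q := 0) (by omega) (by omega) (Or.inr rfl)
    have hexp : b + (a - 2 * b) = a - b := by omega
    simpa only [reesCubic, reesCubicColon, hexp, pow_zero, one_mul] using key
  · have key := reesQuadraticIdeal_colon_reesCubic x y z (a := a) (b := b) (m := b)
      (p := 0) (q := a - 3 * b) (by omega) (by omega) (Or.inl rfl)
    simpa only [reesCubic, reesCubicColon_self, pow_zero, one_mul] using key

end Polynomial

/-- In `S = k[x,y,z,t,u,v,w]` with `a > 2b > 0`, let `L` be the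
ideal generated by `f1, f2, f3, g1, g2, g3`.  If `2b < a < 3b`, then
`(L, H1, H2, H3) : E = (x^{a-b}, y^{a-b}, z^{a-b}, (xy)^{a-2b}, (xz)^{a-2b}, (yz)^{a-2b})`
with `E = w^3 - (xyz)^{3b-a} t u v`; if `a ≥ 3b`, then
`(L, H1, H2, H3) : E' = (x^b, y^b, z^b)^2` with `E' = (xyz)^{a-3b} w^3 - t u v`. -/
theorem stmt19 {k : Type*} [Field k] (a b : ℕ) (hb : 0 < b) (h2b : 2 * b < a) :
    let R := MvPolynomial (Fin 3) k
    let x : R := X 0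
    let y : R := X 1
    let z : R := X 2
    let S := MvPolynomial (Fin 4) R
    let t : S := X 0
    let u : S := X 1
    let v : S := X 2
    let w : S := X 3
    let f1 : S := C (x ^ a) * u - C (y ^ a) * t
    let f2 : S := C (x ^ a) * v - C (z ^ a) * t
    let f3 : S := C (y ^ a) * v - C (z ^ a) * u
    let g1 : S := C (x ^ (a - b)) * w - C ((y * z) ^ b) * t
    let g2 : S := C (y ^ (a - b)) * w - C ((x * z) ^ b) * u
    let g3 : S := C (z ^ (a - b)) * w - C ((x * y) ^ b) * v
    let H1 : S := C ((x * y) ^ (a - 2 * b)) * w ^ 2 - C (z ^ (2 * b)) * t * u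
    let H2 : S := C ((x * z) ^ (a - 2 * b)) * w ^ 2 - C (y ^ (2 * b)) * t * v
    let H3 : S := C ((y * z) ^ (a - 2 * b)) * w ^ 2 - C (x ^ (2 * b)) * u * v
    let LH : Ideal S := Ideal.span {f1, f2, f3, g1, g2, g3, H1, H2, H3}
    let E : S := w ^ 3 - C ((x * y * z) ^ (3 * b - a)) * t * u * v
    let E' : S := C ((x * y * z) ^ (a - 3 * b)) * w ^ 3 - t * u * v
    (a < 3 * b →
      LH.colon (Ideal.span {E}) =
        Ideal.span {C (x ^ (a - b)), C (y ^ (a - b)), C (z ^ (a - b)),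
          C ((x * y) ^ (a - 2 * b)), C ((x * z) ^ (a - 2 * b)),
          C ((y * z) ^ (a - 2 * b))}) ∧
    (3 * b ≤ a →
      LH.colon (Ideal.span {E'}) =
        (Ideal.span {C (x ^ b), C (y ^ b), C (z ^ b)}) ^ 2) := by
  simpa only [reesQuadraticIdeal, map_pow, map_mul, Ideal.colon_span] using
    (stmt19_general (X 0) (X 1) (X 2 : MvPolynomial (Fin 3) k) h2b.le).imp_left (· ∘ le_of_lt)
end
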